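/- arXiv:2506.18221 — 4 statements merged into one kernel-verified Lean document; each statement's English description precedes it below -/
import Mathlib

section
/- Let n ≥ 1, let (Ω, 𝓕) be a measurable space, let μ₁, …, μₙ be probability measures on Ω, and let φ, Y : Ω → ℝ be bounded measurable functions. For μ a probability measure, write Cov_μ(φ, Y) = ∫ φ·Y dμ − (∫ φ dμ)(∫ Y dμ). Suppose Cov_{μᵢ}(φ, Y) ≠ 0 for some index i. Parametrize mixture weights by (λ₁, …, λ_{n−1}) ∈ ℝ^{n−1} with λₙ := 1 − (λ₁ + ⋯ + λ_{n−1}), and for λ in the open simplex S = {λ ∈ ℝ^{n−1} : λⱼ > 0 for all j and λ₁ + ⋯ + λ_{n−1} < 1} set P_mix(λ) = Σⱼ₌₁ⁿ λⱼ μⱼ. Then the set {λ ∈ S : Cov_{P_mix(λ)}(φ, Y) = 0} has (n−1)-dimensional Lebesgue measure zero. -/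
/-!
On the simplex all weights are nonnegative, so the covariance of the mixture is the polynomial
`q(l) = ∑ wⱼ cⱼ - (∑ wⱼ aⱼ) (∑ wⱼ bⱼ)` of degree at most two in `l`, where `w = (l, 1 - ∑ l)` and
`aⱼ, bⱼ, cⱼ` are the `μⱼ`-integrals of `φ`, `Y`, `φ Y`. At the vertex `v` of the simplex
corresponding to `i` it takes the value `cov (μ i) φ Y ≠ 0`, so on every line through `v` it is a
polynomial with nonzero constant term and has finitely many zeros.

A measurable set that meets every line through some point `v` in a null set of parameters is itself
null (`volume_eq_zero_of_lines`): apply Fubini to `{(s, y) | v + s • y ∈ Z}`. Its `y`-sections are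
null, hence so are almost all of its `s`-sections, and for `s ≠ 0` such a section is an affine
rescaling of `Z`.
-/

open MeasureTheory

/-- Covariance of `φ` and `Y` under the measure `μ`:
`Cov_μ(φ, Y) = ∫ φ·Y dμ − (∫ φ dμ)(∫ Y dμ)`. -/
noncomputable def cov {Ω : Type*} [MeasurableSpace Ω] (μ : Measure Ω)
    (φ Y : Ω → ℝ) : ℝ :=
  (∫ x, φ x * Y x ∂μ) - (∫ x, φ x ∂μ) * (∫ x, Y x ∂μ)

/-- The mixture measure `Σⱼ λⱼ μⱼ`. -/
noncomputable def Pmix {Ω : Type*} [MeasurableSpace Ω] {n : ℕ}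
    (μ : Fin n → Measure Ω) (l : Fin n → ℝ) : Measure Ω :=
  ∑ j, ENNReal.ofReal (l j) • μ j

/-- A measurable set meeting every line through `v` in a null set of parameters is null. -/
lemma volume_eq_zero_of_lines {n : ℕ} (Z : Set (Fin n → ℝ)) (hZ : MeasurableSet Z)
    (v : Fin n → ℝ) (h : ∀ y : Fin n → ℝ, volume {s : ℝ | v + s • y ∈ Z} = 0) :
    volume Z = 0 := by
  have hm : MeasurableSet {p : ℝ × (Fin n → ℝ) | v + p.1 • p.2 ∈ Z} :=
    (by fun_prop : Measurable fun p : ℝ × (Fin n → ℝ) => v + p.1 • p.2) hZ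
  have h0 : (volume.prod volume) {p : ℝ × (Fin n → ℝ) | v + p.1 • p.2 ∈ Z} = 0 := by
    rw [Measure.prod_apply_symm hm]
    exact (lintegral_congr fun y => h y).trans lintegral_zero
  have hae : ∀ᵐ s : ℝ, volume {y : Fin n → ℝ | v + s • y ∈ Z} = 0 :=
    (Measure.measure_prod_null hm).1 h0
  obtain ⟨s, hs, hs0⟩ := (hae.and (Measure.ae_ne volume (0 : ℝ))).exists
  have e : {y : Fin n → ℝ | v + s • y ∈ Z} = (fun y => s • y) ⁻¹' ((fun y => v + y) ⁻¹' Z) := rfl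
  rw [e, Measure.addHaar_preimage_smul _ hs0, measure_preimage_add, mul_eq_zero] at hs
  refine hs.resolve_left ?_
  have : 0 < |(s ^ Module.finrank ℝ (Fin n → ℝ))⁻¹| := by positivity
  simpa using this

lemma volume_quadratic_zeros (C A B C' A' B' : ℝ) (h : C - A * B ≠ 0) :
    volume {s : ℝ | (C + s * C') - (A + s * A') * (B + s * B') = 0} = 0 := by
  let p : Polynomial ℝ := (.C C + .C C' * .X) - (.C A + .C A' * .X) * (.C B + .C B' * .X)
  have hp : p ≠ 0 := fun h0 => h (by simpa [p] using congrArg (Polynomial.eval 0) h0)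
  refine ((Polynomial.finite_setOfPred_isRoot hp).subset fun s hs => ?_).measure_zero _
  simpa [p, Polynomial.IsRoot, mul_comm s] using hs

lemma integral_Pmix {Ω : Type*} [MeasurableSpace Ω] {n : ℕ} (μ : Fin n → Measure Ω)
    (w : Fin n → ℝ) (hw : ∀ j, 0 ≤ w j) (f : Ω → ℝ) (hf : ∀ j, Integrable f (μ j)) :
    ∫ x, f x ∂(Pmix μ w) = ∑ j, w j * ∫ x, f x ∂(μ j) := by
  unfold Pmix
  rw [integral_finsetSum_measure fun j _ => (hf j).smul_measure ENNReal.ofReal_ne_top]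
  simp [integral_smul_measure, ENNReal.toReal_ofReal (hw _)]

/-- The weights are affine in the parameters: their increment along `y` is `(y, -∑ y)`. -/
lemma sum_snoc_line {n : ℕ} (v y : Fin n → ℝ) (s : ℝ) (a : Fin (n + 1) → ℝ) :
    ∑ j, (Fin.snoc (v + s • y) (1 - ∑ k, (v + s • y) k) : Fin (n + 1) → ℝ) j * a j =
      ∑ j, (Fin.snoc v (1 - ∑ k, v k) : Fin (n + 1) → ℝ) j * a j +
        s * ∑ j, (Fin.snoc y (-∑ k, y k) : Fin (n + 1) → ℝ) j * a j := by
  simp only [Fin.sum_univ_castSucc, Fin.snoc_castSucc, Fin.snoc_last, Pi.add_apply, Pi.smul_apply,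
    smul_eq_mul, Finset.sum_add_distrib, add_mul, mul_assoc, ← Finset.mul_sum]
  ring

/-- With `n + 1` probability measures `μ₀, …, μₙ` (so at least one measure),
mixture weights are parametrized by `λ = (λ₀, …, λ_{n−1}) ∈ ℝⁿ` with the last weight
`λₙ := 1 − (λ₀ + ⋯ + λ_{n−1})`.  If `φ, Y` are bounded measurable functions with
`Cov_{μᵢ}(φ, Y) ≠ 0` for some index `i`, then within the open simplex
`S = {λ : ∀ j, λⱼ > 0, Σ λⱼ < 1}` the set of parameters `λ` for which the covariance
under the mixture `P_mix(λ)` vanishes has `n`-dimensional Lebesgue measure zero. -/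
theorem covariance_nonzero_ae {Ω : Type*} [MeasurableSpace Ω] (n : ℕ)
    (μ : Fin (n + 1) → Measure Ω)
    (hμ : ∀ j, IsProbabilityMeasure (μ j))
    (φ Y : Ω → ℝ) (hφm : Measurable φ) (hYm : Measurable Y)
    (Cφ : ℝ) (hφb : ∀ x, |φ x| ≤ Cφ)
    (CY : ℝ) (hYb : ∀ x, |Y x| ≤ CY)
    (i : Fin (n + 1)) (hi : cov (μ i) φ Y ≠ 0) :
    volume {l : Fin n → ℝ |
      ((∀ j, 0 < l j) ∧ ∑ j, l j < 1) ∧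
      cov (Pmix μ (Fin.snoc l (1 - ∑ j, l j))) φ Y = 0} = 0 := by
  have int_bdd : ∀ (f : Ω → ℝ) (K : ℝ), Measurable f → (∀ x, |f x| ≤ K) →
      ∀ j, Integrable f (μ j) := fun f K hf hK j =>
    Integrable.of_bound hf.aestronglyMeasurable K (Filter.Eventually.of_forall hK)
  have hφ := int_bdd φ Cφ hφm hφb
  have hY := int_bdd Y CY hYm hYb
  have hφY := int_bdd (fun x => φ x * Y x) (Cφ * CY) (hφm.mul hYm) fun x => by
    rw [abs_mul]
    exact mul_le_mul (hφb x) (hYb x) (abs_nonneg _) ((abs_nonneg _).trans (hφb x))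
  let w : (Fin n → ℝ) → Fin (n + 1) → ℝ := fun l => Fin.snoc l (1 - ∑ j, l j)
  let q : (Fin n → ℝ) → ℝ := fun l => (∑ j, w l j * ∫ x, φ x * Y x ∂(μ j)) -
    (∑ j, w l j * ∫ x, φ x ∂(μ j)) * (∑ j, w l j * ∫ x, Y x ∂(μ j))
  have hq : Measurable q := by
    simp only [q, w, Fin.sum_univ_castSucc, Fin.snoc_castSucc, Fin.snoc_last]
    fun_prop
  -- `v` is the vertex of the simplex whose weight vector `w v` is concentrated at `i`.
  let v : Fin n → ℝ := fun k => (Pi.single i 1 : Fin (n + 1) → ℝ) k.castSucc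
  have hv : w v = Pi.single i 1 := by
    have hsum : ∑ j, (Pi.single i 1 : Fin (n + 1) → ℝ) j = 1 := by simp
    rw [Fin.sum_univ_castSucc] at hsum
    funext j
    refine Fin.lastCases ?_ (fun k => ?_) j
    · simp only [w, v, Fin.snoc_last]
      linarith
    · simp only [w, v, Fin.snoc_castSucc]
  have hqv : q v ≠ 0 := by
    simpa [q, hv, Pi.single_apply, cov] using hi
  refine measure_mono_null (t := {l | q l = 0}) ?_ (volume_eq_zero_of_lines _
    (hq (measurableSet_singleton 0)) v fun y => ?_)
  · rintro l ⟨⟨hpos, hlt⟩, h0⟩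
    have hw : ∀ j, 0 ≤ w l j := by
      intro j
      refine Fin.lastCases ?_ (fun k => ?_) j
      · simp only [w, Fin.snoc_last]
        linarith
      · simpa only [w, Fin.snoc_castSucc] using (hpos k).le
    change cov (Pmix μ (w l)) φ Y = 0 at h0
    rwa [cov, integral_Pmix μ _ hw _ hφY, integral_Pmix μ _ hw _ hφ,
      integral_Pmix μ _ hw _ hY] at h0
  · simp only [Set.mem_ofPred_eq, q, w, sum_snoc_line]
    exact volume_quadratic_zeros _ _ _ _ _ _ hqv
end

section
/- For every λ=(λ₁,λ₂,λ₃,λ₄) with each λᵢ>0 and λ₁+λ₂+λ₃+λ₄=1, the infimum over all affine classifiers (w,b) ∈ ℝ²×ℝ of the 0-1 risk under P_mix(λ) equals min(m₁, m₂, m₃, m₄), and this infimum is attained by a classifier that misclassifies exactly one of the four labeled points (the one of minimal mass). -/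
/-!
The two positive points and the two negative points have the same midpoint, the origin, so no affine
function separates them: correctness at all four points would force both `b > 0` and `b < 0`
(`exists_not_correct`). Since the masses are nonnegative, every classifier has risk at least the
mass of one misclassified point, hence at least the minimal mass. Conversely, for each of the four
points some classifier misclassifies that point alone (`exists_misclassifying_only`); choosing a
point of minimal mass attains the bound.
-/

open Classical

/-- The four labeled points `a₁=((1,0),+1)`, `a₂=((−1,0),+1)`, `a₃=((0,1),−1)`,
`a₄=((0,−1),−1)` in `ℝ² × {±1}`. -/
def pts : Fin 4 → (ℝ × ℝ) × ℝ :=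
  ![((1, 0), 1), ((-1, 0), 1), ((0, 1), -1), ((0, -1), -1)]

/-- The affine classifier `(w, b)` correctly classifies the labeled point `(x, y)`
iff `y·(⟨w,x⟩ + b) > 0`. -/
def correct (w : ℝ × ℝ) (b : ℝ) (p : (ℝ × ℝ) × ℝ) : Prop :=
  0 < p.2 * (w.1 * p.1.1 + w.2 * p.1.2 + b)

/-- The 0-1 risk of the classifier `(w, b)` under the distribution assigning mass
`m j` to the labeled point `pts j`: the total mass of the misclassified points. -/
noncomputable def risk (w : ℝ × ℝ) (b : ℝ) (m : Fin 4 → ℝ) : ℝ :=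
  ∑ j : Fin 4, if correct w b (pts j) then 0 else m j

/-- The masses of the four component distributions `P¹, P², P³, P⁴`
on the labeled points `(a₁, a₂, a₃, a₄)`. -/
noncomputable def comp : Fin 4 → Fin 4 → ℝ :=
  ![![1/2, 0, 1/4, 1/4], ![0, 1/2, 1/4, 1/4],
    ![1/4, 1/4, 1/2, 0], ![1/4, 1/4, 0, 1/2]]

/-- The masses `m₁, m₂, m₃, m₄` that the mixture `P_mix(λ)` assigns to the labeled
points `(a₁, a₂, a₃, a₄)`. -/
noncomputable def mmix (l : Fin 4 → ℝ) : Fin 4 → ℝ :=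
  ![l 0 / 2 + l 2 / 4 + l 3 / 4, l 1 / 2 + l 2 / 4 + l 3 / 4,
    l 0 / 4 + l 1 / 4 + l 2 / 2, l 0 / 4 + l 1 / 4 + l 3 / 2]

/-- The labels form an XOR pattern: no affine classifier is correct at all four points. -/
lemma exists_not_correct (w : ℝ × ℝ) (b : ℝ) : ∃ k, ¬ correct w b (pts k) := by
  by_contra! h
  have h0 := h 0
  have h1 := h 1
  have h2 := h 2
  have h3 := h 3
  simp [correct, pts] at h0 h1 h2 h3
  linarith

lemma exists_misclassifying_only (k : Fin 4) :
    ∃ (w : ℝ × ℝ) (b : ℝ), ¬ correct w b (pts k) ∧ ∀ j, j ≠ k → correct w b (pts j) := by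
  -- The line separates the other point with the same label as `pts k` from the remaining three.
  fin_cases k
  · refine ⟨(-2, 0), -1, ?_, fun j hj => ?_⟩
    · norm_num [correct, pts]
    · fin_cases j <;> first | exact absurd rfl hj | norm_num [correct, pts]
  · refine ⟨(2, 0), -1, ?_, fun j hj => ?_⟩
    · norm_num [correct, pts]
    · fin_cases j <;> first | exact absurd rfl hj | norm_num [correct, pts]
  · refine ⟨(0, 2), 1, ?_, fun j hj => ?_⟩
    · norm_num [correct, pts]
    · fin_cases j <;> first | exact absurd rfl hj | norm_num [correct, pts]
  · refine ⟨(0, -2), 1, ?_, fun j hj => ?_⟩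
    · norm_num [correct, pts]
    · fin_cases j <;> first | exact absurd rfl hj | norm_num [correct, pts]

lemma le_risk_of_not_correct {w : ℝ × ℝ} {b : ℝ} {m : Fin 4 → ℝ} (hm : ∀ j, 0 ≤ m j)
    {k : Fin 4} (hk : ¬ correct w b (pts k)) : m k ≤ risk w b m := by
  have h := Finset.single_le_sum (f := fun j => if correct w b (pts j) then 0 else m j)
    (fun j _ => by split_ifs <;> simp [hm j]) (Finset.mem_univ k)
  simpa [risk, hk] using h

lemma risk_eq_of_misclassifies_only {w : ℝ × ℝ} {b : ℝ} (m : Fin 4 → ℝ) {k : Fin 4}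
    (hk : ¬ correct w b (pts k)) (hj : ∀ j, j ≠ k → correct w b (pts j)) :
    risk w b m = m k := by
  unfold risk
  rw [Finset.sum_eq_single k (fun j _ hjk => if_pos (hj j hjk)) (by simp), if_neg hk]

lemma mmix_nonneg {l : Fin 4 → ℝ} (hpos : ∀ i, 0 < l i) (j : Fin 4) : 0 ≤ mmix l j := by
  have h0 := hpos 0
  have h1 := hpos 1
  have h2 := hpos 2
  have h3 := hpos 3
  fin_cases j <;> simp [mmix] <;> positivity

/-- The infimum over all affine classifiers of the 0-1 risk under `P_mix(λ)` equals
`min(m₁, m₂, m₃, m₄)`, and it is attained by a classifier misclassifying exactly one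
of the four labeled points — one of minimal mass. -/
theorem inf_risk_mixture (l : Fin 4 → ℝ) (hpos : ∀ i, 0 < l i)
    (hsum : ∑ i, l i = 1) :
    sInf {r : ℝ | ∃ (w : ℝ × ℝ) (b : ℝ), risk w b (mmix l) = r}
        = min (min (mmix l 0) (mmix l 1)) (min (mmix l 2) (mmix l 3)) ∧
    ∃ (w : ℝ × ℝ) (b : ℝ) (k : Fin 4),
      mmix l k = min (min (mmix l 0) (mmix l 1)) (min (mmix l 2) (mmix l 3)) ∧
      ¬ correct w b (pts k) ∧ (∀ j, j ≠ k → correct w b (pts j)) ∧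
      risk w b (mmix l) = min (min (mmix l 0) (mmix l 1)) (min (mmix l 2) (mmix l 3)) := by
  obtain ⟨k, hk⟩ := Finite.exists_min (mmix l)
  have hmin : mmix l k = min (min (mmix l 0) (mmix l 1)) (min (mmix l 2) (mmix l 3)) := by
    apply le_antisymm
    · exact le_min (le_min (hk 0) (hk 1)) (le_min (hk 2) (hk 3))
    · fin_cases k <;> simp
  obtain ⟨w, b, hw, hj⟩ := exists_misclassifying_only k
  have hrisk : risk w b (mmix l) = mmix l k := risk_eq_of_misclassifies_only _ hw hj
  have hleast : IsLeast {r : ℝ | ∃ (w : ℝ × ℝ) (b : ℝ), risk w b (mmix l) = r} (mmix l k) := by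
    refine ⟨⟨w, b, hrisk⟩, ?_⟩
    rintro _ ⟨w', b', rfl⟩
    obtain ⟨i, hi⟩ := exists_not_correct w' b'
    exact (hk i).trans (le_risk_of_not_correct (mmix_nonneg hpos) hi)
  exact ⟨hleast.csInf_eq.trans hmin, w, b, k, hmin, hw, hj, hrisk.trans hmin⟩
end

section
/- Every affine classifier (w,b) ∈ ℝ²×ℝ that uses only the first feature, i.e. with w₂ = 0, has 0-1 risk at least 1/4 under P³ and at least 1/4 under P⁴; symmetrically, every affine classifier with w₁ = 0 has 0-1 risk at least 1/4 under P¹ and at least 1/4 under P². -/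
open Classical

/-- A classifier using only the first feature (`w₂ = 0`) has 0-1 risk at least `1/4`
under `P³` and under `P⁴`; symmetrically, a classifier with `w₁ = 0` has 0-1 risk at
least `1/4` under `P¹` and under `P²`. -/
theorem single_feature_classifier_risk (w : ℝ × ℝ) (b : ℝ) :
    (w.2 = 0 → 1/4 ≤ risk w b (comp 2) ∧ 1/4 ≤ risk w b (comp 3)) ∧
    (w.1 = 0 → 1/4 ≤ risk w b (comp 0) ∧ 1/4 ≤ risk w b (comp 1)) := by
  have h0 : correct w b (pts 0) ↔ 0 < w.1 + b := by simp [correct, pts]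
  have h1 : correct w b (pts 1) ↔ 0 < -w.1 + b := by simp [correct, pts]
  have h2 : correct w b (pts 2) ↔ 0 < -(w.2 + b) := by simp [correct, pts]
  have h3 : correct w b (pts 3) ↔ 0 < -(-w.2 + b) := by simp [correct, pts]
  simp only [risk, Fin.sum_univ_four, h0, h1, h2, h3]
  -- A vanishing weight gives the pair on that axis the common score `b`, while the scores of
  -- the other pair average to `b`. If the first pair is misclassified, it contributes `1/2`;
  -- otherwise the sign of `b` forces an error in the other pair, whose points weigh `1/4` each.
  refine ⟨fun h => ⟨?_, ?_⟩, fun h => ⟨?_, ?_⟩⟩ <;> rw [h] <;>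
    simp only [comp, Matrix.cons_val] <;>
    split_ifs <;> first | (exfalso; linarith) | norm_num
end

section
/- Let λ=(λ₁,λ₂,λ₃,λ₄) with each λᵢ>0 and λ₁+λ₂+λ₃+λ₄=1, and suppose the minimum of the mixture masses is uniquely attained at m₂ (i.e., m₂ < m₁, m₂ < m₃, m₂ < m₄). Then every affine classifier (w,b) whose 0-1 risk under P_mix(λ) equals the infimum over all affine classifiers has 0-1 risk exactly 1/4 under P³ and exactly 1/4 under P⁴, whereas there exist affine classifiers with 0-1 risk zero under P³ and affine classifiers with 0-1 risk zero under P⁴. Hence no risk-optimal classifier for the mixture matches direct training on P³ or on P⁴. -/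
/-!
No affine classifier is correct on all four points: `a₁, a₂` would force `0 < b` (their midpoint is
the origin), and `a₃, a₄` would force `b < 0` for the same reason (`not_all_correct`). Misclassifying
`a₂` alone is possible, at mixture risk `m₂`. As `m₂` is the strict minimum of the positive masses, a
classifier of mixture risk at most `m₂` misclassifies none of `a₁, a₃, a₄`, hence exactly `a₂`, and
`a₂` has mass `1/4` under both `P³` and `P⁴`. On the other hand `P³` and `P⁴` each give mass zero to
one point, and some classifier misclassifies only that point.
-/

open Classical

lemma not_all_correct (w : ℝ × ℝ) (b : ℝ) : ¬ ∀ j, correct w b (pts j) := by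
  intro h
  have c0 := h 0
  have c1 := h 1
  have c2 := h 2
  have c3 := h 3
  simp [correct, pts] at c0 c1 c2 c3
  linarith

lemma mass_le_risk {m : Fin 4 → ℝ} (hm : ∀ i, 0 < m i) {w : ℝ × ℝ} {b : ℝ} {j : Fin 4}
    (hj : ¬ correct w b (pts j)) : m j ≤ risk w b m := by
  have h := Finset.single_le_sum
    (f := fun j : Fin 4 => if correct w b (pts j) then 0 else m j)
    (fun i _ => by split_ifs; exacts [le_rfl, (hm i).le]) (Finset.mem_univ j)
  simpa [risk, hj] using h

lemma risk_eq_mass (m : Fin 4 → ℝ) {w : ℝ × ℝ} {b : ℝ} {k : Fin 4}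
    (hk : ¬ correct w b (pts k)) (h : ∀ j, j ≠ k → correct w b (pts j)) :
    risk w b m = m k := by
  unfold risk
  rw [Finset.sum_eq_single k (fun j _ hjk => if_pos (h j hjk)) (by simp), if_neg hk]

/-- If the minimum of the mixture masses is uniquely attained at `m₂`, then every
affine classifier whose 0-1 risk under `P_mix(λ)` equals the infimum over all affine
classifiers has risk exactly `1/4` under `P³` and exactly `1/4` under `P⁴`, whereas
there exist affine classifiers with zero risk under `P³`, and ones with zero risk
under `P⁴`: no risk-optimal classifier for the mixture matches direct training on
`P³` or on `P⁴`. -/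
theorem mixture_optimal_fails_on_components (l : Fin 4 → ℝ)
    (hpos : ∀ i, 0 < l i) (hsum : ∑ i, l i = 1)
    (h0 : mmix l 1 < mmix l 0) (h2 : mmix l 1 < mmix l 2) (h3 : mmix l 1 < mmix l 3) :
    (∀ (w : ℝ × ℝ) (b : ℝ),
      risk w b (mmix l)
          = sInf {r : ℝ | ∃ (w' : ℝ × ℝ) (b' : ℝ), risk w' b' (mmix l) = r} →
      risk w b (comp 2) = 1/4 ∧ risk w b (comp 3) = 1/4) ∧
    (∃ (w : ℝ × ℝ) (b : ℝ), risk w b (comp 2) = 0) ∧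
    (∃ (w : ℝ × ℝ) (b : ℝ), risk w b (comp 3) = 0) := by
  have hm : ∀ i, 0 < mmix l i := by
    have p0 := hpos 0
    have p1 := hpos 1
    have p2 := hpos 2
    have p3 := hpos 3
    intro i
    fin_cases i <;> simp [mmix] <;> positivity
  -- The classifier `-2 x₂ + 1` is wrong only at `a₄`, and `2 x₂ + 1` only at `a₃`.
  refine ⟨fun w b hopt => ?_, ⟨(0, -2), 1, ?_⟩, ⟨(0, 2), 1, ?_⟩⟩
  · have hle : risk w b (mmix l) ≤ mmix l 1 := by
      rw [hopt]
      -- The classifier `2 x₁ - 1` is wrong only at `a₂`.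
      refine csInf_le ⟨0, ?_⟩ ⟨(2, 0), -1, ?_⟩
      · rintro _ ⟨w', b', rfl⟩
        exact Finset.sum_nonneg fun i _ => by split_ifs; exacts [le_rfl, (hm i).le]
      · apply risk_eq_mass
        · norm_num [correct, pts]
        · intro j hj
          fin_cases j <;> first | exact absurd rfl hj | norm_num [correct, pts]
    have hcorr : ∀ j, j ≠ 1 → correct w b (pts j) := by
      intro j hj
      by_contra hc
      have hlt : mmix l 1 < mmix l j := by
        fin_cases j
        exacts [h0, absurd rfl hj, h2, h3]
      exact absurd (hlt.trans_le (mass_le_risk hm hc)) hle.not_gt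
    have hwrong : ¬ correct w b (pts 1) := fun hc =>
      not_all_correct w b fun j => if hj : j = 1 then hj ▸ hc else hcorr j hj
    rw [risk_eq_mass _ hwrong hcorr, risk_eq_mass _ hwrong hcorr]
    simp [comp]
  · refine (risk_eq_mass (k := 3) (comp 2) ?_ ?_).trans (by simp [comp])
    · norm_num [correct, show pts 3 = ((0, -1), -1) from rfl]
    · intro j hj
      fin_cases j <;> first | exact absurd rfl hj | norm_num [correct, pts]
  · refine (risk_eq_mass (k := 2) (comp 3) ?_ ?_).trans (by simp [comp])
    · norm_num [correct, show pts 2 = ((0, 1), -1) from rfl]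
    · intro j hj
      fin_cases j <;> first | exact absurd rfl hj | norm_num [correct, pts]
end
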